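/- Let S ∈ ℝ^{p×p} be symmetric positive semidefinite and μ > 0, and define f₁(Θ) = Tr(SΘ) − log det(Θ) + μ ‖Θ‖_{1,off} and f₂(Θ) = Tr(P_𝔊(S)Θ) − log det(Θ) + μ ‖Θ‖_{1,off} on symmetric positive definite matrices Θ. Then the infimum of f₁ over {Θ ≻ 0, Θ ∈ W_𝔊} equals the infimum of f₂ over {Θ ≻ 0}; moreover, if f₂ has a unique minimizer Θ̂ over {Θ ≻ 0}, then Θ̂ ∈ W_𝔊 and Θ̂ is the unique minimizer of f₁ over {Θ ≻ 0, Θ ∈ W_𝔊}. -/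

import Mathlib

/-!
Since `Θ ↦ -log det Θ` and the off-diagonal `ℓ₁` norm are convex and invariant under simultaneous
permutations of rows and columns, the symmetrized objective is convex and `𝔊`-invariant. Its
sublevel sets inside the positive definite cone are therefore convex and `𝔊`-stable, so they contain
the Reynolds average of each of their points: averaging over `𝔊` does not increase the objective.
Both objectives agree on `W_𝔊`, because the trace pairing with a fixed point does not see the
averaging of `S`.

The concavity of `log det` comes from its tangent planes:
`log det A ≤ log det B + Tr(B⁻¹A) - p` reduces, by conjugation with a square root of `B⁻¹`, to
`log x ≤ x - 1` for the eigenvalues.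
-/

open MeasureTheory ProbabilityTheory Matrix Finset Real

noncomputable section

/-- The `p × p` permutation matrix `Π_σ` of a permutation `σ` of `Fin p`. -/
def permMatrix {p : ℕ} (σ : Equiv.Perm (Fin p)) : Matrix (Fin p) (Fin p) ℝ :=
  Matrix.of fun i j => if σ j = i then (1 : ℝ) else 0

/-- `M` lies in the fixed-point subspace `W_𝔊`, i.e. `Π_g M Π_gᵀ = M` for all `g ∈ 𝔊`. -/
def IsFixedPoint {p : ℕ} (G : Subgroup (Equiv.Perm (Fin p)))
    (M : Matrix (Fin p) (Fin p) ℝ) : Prop :=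
  ∀ g ∈ G, permMatrix g * M * (permMatrix g)ᵀ = M

/-- The Reynolds average `P_𝔊(M) = |𝔊|⁻¹ ∑_{g ∈ 𝔊} Π_g M Π_gᵀ`. -/
def reynolds {p : ℕ} (G : Subgroup (Equiv.Perm (Fin p))) [Fintype G]
    (M : Matrix (Fin p) (Fin p) ℝ) : Matrix (Fin p) (Fin p) ℝ :=
  (Fintype.card G : ℝ)⁻¹ •
    ∑ g : G, permMatrix (g : Equiv.Perm (Fin p)) * M * (permMatrix (g : Equiv.Perm (Fin p)))ᵀ

/-- The off-diagonal ℓ₁ norm `‖M‖_{1,off} = ∑_{i ≠ j} |M_ij|`. -/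
def offDiagL1 {p : ℕ} (M : Matrix (Fin p) (Fin p) ℝ) : ℝ :=
  ∑ i, ∑ j, if i ≠ j then |M i j| else 0

/-- The ℓ₁-regularized log-determinant objective `Θ ↦ Tr(AΘ) − log det Θ + μ ‖Θ‖_{1,off}`. -/
def logDetObjective {p : ℕ} (A : Matrix (Fin p) (Fin p) ℝ) (μ : ℝ)
    (Θ : Matrix (Fin p) (Fin p) ℝ) : ℝ :=
  (A * Θ).trace - Real.log Θ.det + μ * offDiagL1 Θ

section LogDet

open scoped ComplexOrder

variable {n 𝕜 : Type*} [RCLike 𝕜]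

lemma convex_posDef : Convex ℝ {A : Matrix n n 𝕜 | A.PosDef} :=
  convex_iff_forall_pos.mpr fun _ hA _ hB _ _ ha hb _ => (hA.smul ha).add (hB.smul hb)

variable [Fintype n] [DecidableEq n] {A B : Matrix n n 𝕜}

lemma log_det_le_trace_sub_card (hA : A.PosDef) :
    Real.log (RCLike.re A.det) ≤ RCLike.re A.trace - Fintype.card n := by
  rw [hA.isHermitian.det_eq_prod_eigenvalues, hA.isHermitian.trace_eq_sum_eigenvalues,
    ← RCLike.ofReal_prod, ← RCLike.ofReal_sum, RCLike.ofReal_re, RCLike.ofReal_re,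
    Real.log_prod fun i _ => (hA.eigenvalues_pos i).ne']
  calc ∑ i, Real.log (hA.isHermitian.eigenvalues i)
      ≤ ∑ i, (hA.isHermitian.eigenvalues i - 1) :=
        Finset.sum_le_sum fun i _ => Real.log_le_sub_one_of_pos (hA.eigenvalues_pos i)
    _ = ∑ i, hA.isHermitian.eigenvalues i - Fintype.card n := by simp

open scoped MatrixOrder Matrix.Norms.L2Operator in
lemma log_det_le_log_det_add_trace_inv_mul (hA : A.PosDef) (hB : B.PosDef) :
    Real.log (RCLike.re A.det) ≤
      Real.log (RCLike.re B.det) + (RCLike.re (B⁻¹ * A).trace - Fintype.card n) := by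
  obtain ⟨R, hR, hBR⟩ : ∃ R : Matrix n n 𝕜, IsUnit R ∧ B⁻¹ = star R * R :=
    CStarAlgebra.isStrictlyPositive_iff_eq_star_mul_self.mp hB.inv.isStrictlyPositive
  have hdet : (R * A * star R).det = B.det⁻¹ * A.det := by
    rw [← Ring.inverse_eq_inv', ← Matrix.det_nonsing_inv, hBR]
    simp only [Matrix.det_mul]
    ring
  have htrace : (R * A * star R).trace = (B⁻¹ * A).trace := by
    rw [hBR, Matrix.trace_mul_comm, ← Matrix.mul_assoc]
  obtain ⟨a, ha, hAa⟩ := RCLike.pos_iff_exists_ofReal.mp hA.det_pos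
  obtain ⟨b, hb, hBb⟩ := RCLike.pos_iff_exists_ofReal.mp hB.det_pos
  have h := log_det_le_trace_sub_card (hR.posDef_star_right_conjugate_iff.mpr hA)
  rw [hdet, htrace, ← hAa, ← hBb, ← RCLike.ofReal_inv, ← RCLike.ofReal_mul, RCLike.ofReal_re,
    Real.log_mul (inv_ne_zero hb.ne') ha.ne', Real.log_inv] at h
  rw [← hAa, ← hBb, RCLike.ofReal_re, RCLike.ofReal_re]
  linarith

lemma concaveOn_log_det :
    ConcaveOn ℝ {A : Matrix n n 𝕜 | A.PosDef} fun A => Real.log (RCLike.re A.det) := by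
  refine ⟨convex_posDef, fun A hA B hB a b ha hb hab => ?_⟩
  set C := a • A + b • B
  have hC : C.PosDef := convex_posDef hA hB ha hb hab
  have htrace : a * RCLike.re (C⁻¹ * A).trace + b * RCLike.re (C⁻¹ * B).trace =
      Fintype.card n := by
    have h : a • (C⁻¹ * A).trace + b • (C⁻¹ * B).trace = Fintype.card n := by
      rw [← Matrix.trace_smul, ← Matrix.trace_smul, ← Matrix.trace_add, ← Matrix.mul_smul,
        ← Matrix.mul_smul, ← Matrix.mul_add,
        Matrix.nonsing_inv_mul _ ((Matrix.isUnit_iff_isUnit_det _).mp hC.isUnit),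
        Matrix.trace_one]
    simpa [RCLike.smul_re] using congrArg RCLike.re h
  calc a • Real.log (RCLike.re A.det) + b • Real.log (RCLike.re B.det)
      ≤ a * (Real.log (RCLike.re C.det) + (RCLike.re (C⁻¹ * A).trace - Fintype.card n)) +
          b * (Real.log (RCLike.re C.det) + (RCLike.re (C⁻¹ * B).trace - Fintype.card n)) :=
        add_le_add
          (mul_le_mul_of_nonneg_left (log_det_le_log_det_add_trace_inv_mul hA hC) ha)
          (mul_le_mul_of_nonneg_left (log_det_le_log_det_add_trace_inv_mul hB hC) hb)
    _ = Real.log (RCLike.re C.det) := by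
        linear_combination htrace + (Real.log (RCLike.re C.det) - Fintype.card n) * hab

end LogDet

lemma trace_reindex_mul_reindex {m n R : Type*} [Fintype m] [Fintype n]
    [NonUnitalNonAssocSemiring R] (e : m ≃ n) (A B : Matrix m m R) :
    (reindex e e A * reindex e e B).trace = (A * B).trace := by
  rw [reindex_apply, reindex_apply, submatrix_mul_equiv]
  exact e.symm.sum_comp fun i => (A * B) i i

lemma iInf_subtype_and_eq {X α : Type*} [ConditionallyCompleteLinearOrder α] {C W : X → Prop}
    {f : X → α} (h : ∀ x, C x → ∃ y, C y ∧ W y ∧ f y ≤ f x) :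
    ⨅ x : {x // C x ∧ W x}, f x = ⨅ x : {x // C x}, f x := by
  refine csInf_eq_csInf_of_forall_exists_le ?_ ?_
  · rintro _ ⟨⟨x, hx, -⟩, rfl⟩
    exact ⟨f x, ⟨⟨x, hx⟩, rfl⟩, le_rfl⟩
  · rintro _ ⟨⟨x, hx⟩, rfl⟩
    obtain ⟨y, hyC, hyW, hyx⟩ := h x hx
    exact ⟨f y, ⟨⟨y, hyC, hyW⟩, rfl⟩, hyx⟩

section Reynolds

variable {p : ℕ}

lemma permMatrix_mul_mul_transpose (σ : Equiv.Perm (Fin p)) (M : Matrix (Fin p) (Fin p) ℝ) :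
    permMatrix σ * M * (permMatrix σ)ᵀ = reindex σ σ M := by
  ext i j
  simp [permMatrix, Matrix.mul_apply, ← Equiv.eq_symm_apply]

lemma isFixedPoint_iff_reindex {G : Subgroup (Equiv.Perm (Fin p))}
    {M : Matrix (Fin p) (Fin p) ℝ} : IsFixedPoint G M ↔ ∀ g ∈ G, reindex g g M = M := by
  simp only [IsFixedPoint, permMatrix_mul_mul_transpose]

variable (G : Subgroup (Equiv.Perm (Fin p))) [Fintype G]

lemma reynolds_eq_sum_reindex (M : Matrix (Fin p) (Fin p) ℝ) :
    reynolds G M = (Fintype.card G : ℝ)⁻¹ • ∑ g : G, reindex g.1 g.1 M := by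
  simp only [reynolds, permMatrix_mul_mul_transpose]

lemma isFixedPoint_reynolds (M : Matrix (Fin p) (Fin p) ℝ) : IsFixedPoint G (reynolds G M) := by
  refine isFixedPoint_iff_reindex.mpr fun h hh => ?_
  ext i j
  simp only [reynolds_eq_sum_reindex, reindex_apply, submatrix_apply, Matrix.smul_apply,
    Matrix.sum_apply]
  congr 1
  exact Fintype.sum_equiv (Equiv.mulLeft (⟨h, hh⟩ : G)) _ _ fun g => rfl

variable {G}

lemma reynolds_mem_of_convex {s : Set (Matrix (Fin p) (Fin p) ℝ)} (hs : Convex ℝ s)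
    {M : Matrix (Fin p) (Fin p) ℝ} (hM : ∀ g ∈ G, reindex g g M ∈ s) : reynolds G M ∈ s := by
  rw [reynolds_eq_sum_reindex, Finset.smul_sum]
  exact hs.sum_mem (fun _ _ => by positivity) (by simp) fun g _ => hM g.1 g.2

lemma trace_reynolds_mul (A : Matrix (Fin p) (Fin p) ℝ) {B : Matrix (Fin p) (Fin p) ℝ}
    (hB : IsFixedPoint G B) : (reynolds G A * B).trace = (A * B).trace := by
  have hconj (g : G) : (reindex g.1 g.1 A * B).trace = (A * B).trace := by
    conv_lhs => rw [← isFixedPoint_iff_reindex.mp hB g.1 g.2]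
    exact trace_reindex_mul_reindex _ _ _
  rw [reynolds_eq_sum_reindex, Matrix.smul_mul, Matrix.sum_mul, Matrix.trace_smul,
    Matrix.trace_sum, Finset.sum_congr rfl fun g _ => hconj g]
  simp

end Reynolds

section Objective

variable {p : ℕ}

lemma convexOn_offDiagL1 :
    ConvexOn ℝ Set.univ (offDiagL1 : Matrix (Fin p) (Fin p) ℝ → ℝ) := by
  refine ⟨convex_univ, fun M _ N _ a b ha hb _ => ?_⟩
  simp only [offDiagL1, smul_eq_mul, Finset.mul_sum, ← Finset.sum_add_distrib]
  refine Finset.sum_le_sum fun i _ => Finset.sum_le_sum fun j _ => ?_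
  split_ifs
  · simpa [abs_mul, abs_of_nonneg ha, abs_of_nonneg hb] using abs_add_le (a * M i j) (b * N i j)
  · simp

lemma offDiagL1_reindex (σ : Equiv.Perm (Fin p)) (M : Matrix (Fin p) (Fin p) ℝ) :
    offDiagL1 (reindex σ σ M) = offDiagL1 M :=
  Fintype.sum_equiv σ.symm _ _ fun i => Fintype.sum_equiv σ.symm _ _ fun j => by simp

lemma convexOn_logDetObjective (A : Matrix (Fin p) (Fin p) ℝ) {μ : ℝ} (hμ : 0 ≤ μ) :
    ConvexOn ℝ {Θ : Matrix (Fin p) (Fin p) ℝ | Θ.PosDef} (logDetObjective A μ) := by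
  have htrace : ConvexOn ℝ {Θ : Matrix (Fin p) (Fin p) ℝ | Θ.PosDef} fun Θ => (A * Θ).trace :=
    (traceLinearMap (Fin p) ℝ ℝ ∘ₗ LinearMap.mulLeft ℝ A).convexOn convex_posDef
  exact (htrace.sub concaveOn_log_det).add
    ((convexOn_offDiagL1.subset (Set.subset_univ _) convex_posDef).smul hμ)

variable {G : Subgroup (Equiv.Perm (Fin p))} {A Θ : Matrix (Fin p) (Fin p) ℝ}

lemma logDetObjective_reindex (hA : IsFixedPoint G A) (μ : ℝ) {g : Equiv.Perm (Fin p)}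
    (hg : g ∈ G) (Θ : Matrix (Fin p) (Fin p) ℝ) :
    logDetObjective A μ (reindex g g Θ) = logDetObjective A μ Θ := by
  have htrace : (A * reindex g g Θ).trace = (A * Θ).trace := by
    conv_lhs => rw [← isFixedPoint_iff_reindex.mp hA g hg]
    exact trace_reindex_mul_reindex _ _ _
  rw [logDetObjective, logDetObjective, htrace, det_reindex_self, offDiagL1_reindex]

variable [Fintype G]

lemma posDef_reynolds (hΘ : Θ.PosDef) : (reynolds G Θ).PosDef :=
  reynolds_mem_of_convex convex_posDef fun g _ => hΘ.submatrix g.symm.injective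

lemma logDetObjective_reynolds_le (hA : IsFixedPoint G A) {μ : ℝ} (hμ : 0 ≤ μ) (hΘ : Θ.PosDef) :
    logDetObjective A μ (reynolds G Θ) ≤ logDetObjective A μ Θ :=
  (reynolds_mem_of_convex ((convexOn_logDetObjective A hμ).convex_le (logDetObjective A μ Θ))
    fun g hg => ⟨hΘ.submatrix g.symm.injective, (logDetObjective_reindex hA μ hg Θ).le⟩).2

lemma logDetObjective_reynolds_left (A : Matrix (Fin p) (Fin p) ℝ) (μ : ℝ)
    (hΘ : IsFixedPoint G Θ) :
    logDetObjective (reynolds G A) μ Θ = logDetObjective A μ Θ := by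
  rw [logDetObjective, logDetObjective, trace_reynolds_mul A hΘ]

end Objective

theorem logDet_symmetrization_equivalence_general
    {p : ℕ} (G : Subgroup (Equiv.Perm (Fin p))) [Fintype G]
    (S : Matrix (Fin p) (Fin p) ℝ) {μ : ℝ} (hμ : 0 ≤ μ) :
    (⨅ Θ : {Θ : Matrix (Fin p) (Fin p) ℝ // Θ.PosDef ∧ IsFixedPoint G Θ},
        logDetObjective S μ Θ)
      = (⨅ Θ : {Θ : Matrix (Fin p) (Fin p) ℝ // Θ.PosDef},
          logDetObjective (reynolds G S) μ Θ) ∧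
    ∀ Θhat : Matrix (Fin p) (Fin p) ℝ, Θhat.PosDef →
      (∀ Θ : Matrix (Fin p) (Fin p) ℝ, Θ.PosDef → Θ ≠ Θhat →
        logDetObjective (reynolds G S) μ Θhat < logDetObjective (reynolds G S) μ Θ) →
      IsFixedPoint G Θhat ∧
        ∀ Θ : Matrix (Fin p) (Fin p) ℝ, Θ.PosDef → IsFixedPoint G Θ → Θ ≠ Θhat →
          logDetObjective S μ Θhat < logDetObjective S μ Θ := by
  have hdescent {Θ : Matrix (Fin p) (Fin p) ℝ} (hΘ : Θ.PosDef) :=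
    logDetObjective_reynolds_le (isFixedPoint_reynolds G S) hμ hΘ
  refine ⟨?_, fun Θhat hpos hmin => ?_⟩
  · rw [← iInf_subtype_and_eq fun Θ hΘ =>
      ⟨reynolds G Θ, posDef_reynolds hΘ, isFixedPoint_reynolds G Θ, hdescent hΘ⟩]
    exact iInf_congr fun Θ => (logDetObjective_reynolds_left S μ Θ.2.2).symm
  · have hreynolds : reynolds G Θhat = Θhat := by
      by_contra hne
      exact (hmin _ (posDef_reynolds hpos) hne).not_ge (hdescent hpos)
    have hfix : IsFixedPoint G Θhat := hreynolds ▸ isFixedPoint_reynolds G Θhat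
    refine ⟨hfix, fun Θ hΘ hΘfix hne => ?_⟩
    rw [← logDetObjective_reynolds_left S μ hfix, ← logDetObjective_reynolds_left S μ hΘfix]
    exact hmin Θ hΘ hne

/-- Restricting the ℓ₁-regularized log-determinant program to the fixed-point subspace is the
same as replacing the input matrix `S` by its Reynolds average `P_𝔊(S)`: the two programs have
the same optimal value, and a unique minimizer of the symmetrized program lies in `W_𝔊` and is
the unique minimizer of the restricted program. -/
theorem logDet_symmetrization_equivalence
    {p : ℕ} (G : Subgroup (Equiv.Perm (Fin p))) [Fintype G]
    (S : Matrix (Fin p) (Fin p) ℝ) (hS : S.PosSemidef) (μ : ℝ) (hμ : 0 < μ) :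
    (⨅ Θ : {Θ : Matrix (Fin p) (Fin p) ℝ // Θ.PosDef ∧ IsFixedPoint G Θ},
        logDetObjective S μ Θ)
      = (⨅ Θ : {Θ : Matrix (Fin p) (Fin p) ℝ // Θ.PosDef},
          logDetObjective (reynolds G S) μ Θ) ∧
    ∀ Θhat : Matrix (Fin p) (Fin p) ℝ, Θhat.PosDef →
      (∀ Θ : Matrix (Fin p) (Fin p) ℝ, Θ.PosDef → Θ ≠ Θhat →
        logDetObjective (reynolds G S) μ Θhat < logDetObjective (reynolds G S) μ Θ) →
      IsFixedPoint G Θhat ∧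
        ∀ Θ : Matrix (Fin p) (Fin p) ℝ, Θ.PosDef → IsFixedPoint G Θ → Θ ≠ Θhat →
          logDetObjective S μ Θhat < logDetObjective S μ Θ :=
  logDet_symmetrization_equivalence_general G S hμ.le

end
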